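/- For every even natural number n ≥ 6, the Orchard crossing number of the wheel graph W_{n,1} equals n(n² − 4n + 12)/8. -/

import Mathlib

set_option linter.unusedSectionVars false

/-!
Common definitions for the Orchard crossing number
(Feder–Garber, "The Orchard crossing number of an abstract graph").
-/

noncomputable section

/-- Points of the plane. -/
abbrev Pt : Type := ℝ × ℝ

/-- The line through two points of the plane. -/
def lineThrough (p q : Pt) : Set Pt := (affineSpan ℝ ({p, q} : Set Pt) : Set Pt)

/-- A line (or any set) `L` separates the points `P` and `Q` if both lie off `L`
and they lie in different connected components of the complement of `L`. -/
def Separates (L : Set Pt) (P Q : Pt) : Prop :=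
  P ∉ L ∧ Q ∉ L ∧ connectedComponentIn Lᶜ P ≠ connectedComponentIn Lᶜ Q

theorem Separates.symm {L : Set Pt} {P Q : Pt} (h : Separates L P Q) : Separates L Q P :=
  ⟨h.2.1, h.1, h.2.2.symm⟩

/-- A generic configuration: a finite set of points, no three of which are collinear. -/
def GenericConfig (S : Set Pt) : Prop :=
  S.Finite ∧ ∀ p ∈ S, ∀ q ∈ S, ∀ r ∈ S, p ≠ q → p ≠ r → q ≠ r →
    ¬ Collinear ℝ ({p, q, r} : Set Pt)

/-- A finite set of points is in convex position if every point of it is an extreme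
point of its convex hull, i.e. lies outside the convex hull of the other points. -/
def ConvexPosition (S : Set Pt) : Prop :=
  ∀ p ∈ S, p ∉ convexHull ℝ (S \ {p})

variable {V : Type*} [Fintype V] [DecidableEq V]

/-- A rectilinear drawing of a graph on vertex set `V`: an injective placement of the
vertices in the plane whose image is a generic configuration. -/
def IsRectDrawing (f : V → Pt) : Prop :=
  Function.Injective f ∧ GenericConfig (Set.range f)

/-- `sepCount f s t` is `n(s,t)`: the number of (unordered) pairs of vertices, both
different from `s` and `t`, whose drawn points span a line separating `f s` from `f t`. -/
def sepCount (f : V → Pt) (s t : V) : ℕ :=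
  Set.ncard {e : Finset V | ∃ a b : V, e = {a, b} ∧ a ≠ b ∧ s ∉ e ∧ t ∉ e ∧
    Separates (lineThrough (f a) (f b)) (f s) (f t)}

theorem sepCount_symm (f : V → Pt) (s t : V) : sepCount f s t = sepCount f t s := by
  unfold sepCount
  congr 1
  ext e
  constructor
  · rintro ⟨a, b, rfl, hab, hs, ht, hsep⟩
    exact ⟨a, b, rfl, hab, ht, hs, hsep.symm⟩
  · rintro ⟨a, b, rfl, hab, ht, hs, hsep⟩
    exact ⟨a, b, rfl, hab, hs, ht, hsep.symm⟩

/-- The crossing number `n(R(G))` of a drawing: the sum of `n(s,t)` over all edges. -/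
def drawingCrossings (G : SimpleGraph V) (f : V → Pt) : ℕ :=
  ∑ e ∈ G.edgeSet.toFinite.toFinset,
    Sym2.lift ⟨fun s t => sepCount f s t, fun s t => sepCount_symm f s t⟩ e

/-- The Orchard crossing number: the minimum of `n(R(G))` over all rectilinear drawings. -/
def OCN (G : SimpleGraph V) : ℕ :=
  sInf {n | ∃ f : V → Pt, IsRectDrawing f ∧ drawingCrossings G f = n}

/-- The maximal Orchard crossing number: the maximum of `n(R(G))` over all drawings. -/
def MOCN (G : SimpleGraph V) : ℕ :=
  sSup {n | ∃ f : V → Pt, IsRectDrawing f ∧ drawingCrossings G f = n}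

/-- The open segment drawn for an edge. -/
def edgeSeg (f : V → Pt) (e : Sym2 V) : Set Pt :=
  Sym2.lift ⟨fun a b => openSegment ℝ (f a) (f b), fun a b => openSegment_symm ℝ (f a) (f b)⟩ e

/-- The number of unordered pairs of distinct edges of `G` whose drawn open segments
intersect. -/
def crossPairs (G : SimpleGraph V) (f : V → Pt) : ℕ :=
  Set.ncard {p : Finset (Sym2 V) | ∃ e₁ e₂ : Sym2 V, p = {e₁, e₂} ∧ e₁ ≠ e₂ ∧
    e₁ ∈ G.edgeSet ∧ e₂ ∈ G.edgeSet ∧ (edgeSeg f e₁ ∩ edgeSeg f e₂).Nonempty}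

/-- The rectilinear crossing number: the minimum number of crossing pairs of edges
over all rectilinear drawings. -/
def rcr (G : SimpleGraph V) : ℕ :=
  sInf {n | ∃ f : V → Pt, IsRectDrawing f ∧ crossPairs G f = n}

/-- The number of 4-element subsets of the drawn points which are in convex position. -/
def convexFour (f : V → Pt) : ℕ :=
  Set.ncard {Q : Finset Pt | Q.card = 4 ∧ (Q : Set Pt) ⊆ Set.range f ∧
    ConvexPosition (Q : Set Pt)}

/-- The cyclic successor on `Fin n`. -/
def nextFin {n : ℕ} (i : Fin n) : Fin n :=
  ⟨(i.val + 1) % n, Nat.mod_lt _ (Nat.zero_lt_of_lt i.isLt)⟩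

/-- The star graph `K_{n,1}` on `n+1` vertices: the center `0` is joined to each of
the `n` outer vertices. -/
def starGraph (n : ℕ) : SimpleGraph (Fin (n + 1)) :=
  SimpleGraph.fromEdgeSet {e | ∃ i : Fin n, e = s((0 : Fin (n + 1)), i.succ)}

/-- The wheel graph `W_{n,1}` on `n+1` vertices: a cycle on the `n` outer vertices
together with a hub `0` joined to each of them. -/
def wheelGraph (n : ℕ) : SimpleGraph (Fin (n + 1)) :=
  SimpleGraph.fromEdgeSet
    ({e | ∃ i : Fin n, e = s((0 : Fin (n + 1)), i.succ)} ∪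
     {e | ∃ i : Fin n, e = s(i.succ, (nextFin i).succ)})

/-- The cycle graph `C_n` on the outer vertices `1, …, n` of `Fin (n+1)`, together
with the isolated vertex `0`. -/
def cycleWithIsolated (n : ℕ) : SimpleGraph (Fin (n + 1)) :=
  SimpleGraph.fromEdgeSet {e | ∃ i : Fin n, e = s(i.succ, (nextFin i).succ)}

/-- `HullCycle f` says that for every `i`, all the other drawn points lie (strictly) on
one side of the line through `f i` and `f (i+1)`; for an injective generic placement this
means the points are in convex position and occur around the convex hull exactly in the
cyclic order `f 0, f 1, …`. -/
def HullCycle {m : ℕ} (f : Fin m → Pt) : Prop :=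
  ∀ i j l : Fin m, j ≠ i → j ≠ nextFin i → l ≠ i → l ≠ nextFin i →
    ¬ Separates (lineThrough (f i) (f (nextFin i))) (f j) (f l)

end

/-- Twice the signed area of the triangle `p q r`. -/
noncomputable def orient (p q r : Pt) : ℝ := (q.1 - p.1) * (r.2 - p.2) - (q.2 - p.2) * (r.1 - p.1)

theorem orient_rotate (p q r : Pt) : orient q r p = orient p q r := by
  unfold orient; ring

theorem orient_swap (p q r : Pt) : orient p r q = -orient p q r := by
  unfold orient; ring

theorem orient_swap_left (p q r : Pt) : orient q p r = -orient p q r := by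
  unfold orient; ring

theorem mem_lineThrough {p q r : Pt} (hpq : p ≠ q) :
    r ∈ lineThrough p q ↔ orient p q r = 0 := by
  have hr : r = (r - p) +ᵥ p := by simp
  unfold lineThrough orient
  rw [SetLike.mem_coe]
  conv_lhs => rw [hr, vadd_left_mem_affineSpan_pair]
  simp only [Prod.ext_iff, Prod.smul_fst, Prod.smul_snd, vsub_eq_sub, Prod.fst_sub, Prod.snd_sub,
    smul_eq_mul]
  constructor
  · rintro ⟨c, h1, h2⟩
    rw [← h1, ← h2]
    ring
  · intro h
    by_cases h1 : q.1 - p.1 = 0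
    · have h2 : q.2 - p.2 ≠ 0 := fun h2 => hpq (Prod.ext (by linarith) (by linarith))
      have h3 : r.1 - p.1 = 0 := by
        rw [h1, zero_mul, zero_sub, neg_eq_zero] at h
        exact (mul_eq_zero.mp h).resolve_left h2
      refine ⟨(r.2 - p.2) / (q.2 - p.2), ?_, ?_⟩
      · rw [h1, h3, mul_zero]
      · field_simp
    · refine ⟨(r.1 - p.1) / (q.1 - p.1), ?_, ?_⟩
      · field_simp
      · field_simp
        linarith

theorem collinear_iff_orient_eq_zero {p q r : Pt} (hpq : p ≠ q) :
    Collinear ℝ ({p, q, r} : Set Pt) ↔ orient p q r = 0 := by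
  rw [← mem_lineThrough hpq]
  constructor
  · intro h
    exact h.mem_affineSpan_of_mem_of_ne (by simp) (by simp) (by simp) hpq
  · intro h
    have := collinear_insert_of_mem_affineSpan_pair (k := ℝ) (p₁ := r) (p₂ := p) (p₃ := q) h
    convert this using 1
    ext; simp; tauto

theorem continuous_orient (p q : Pt) : Continuous (orient p q) := by
  unfold orient; fun_prop

theorem convex_setOf_orient_pos (p q : Pt) : Convex ℝ {x | 0 < orient p q x} := by
  intro x hx y hy a b ha hb hab
  simp only [Set.mem_ofPred_eq] at *
  have h : orient p q (a • x + b • y) = a * orient p q x + b * orient p q y := by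
    obtain rfl : a = 1 - b := by linarith
    simp [orient]; ring
  rw [h]
  rcases ha.eq_or_lt with rfl | ha
  · have : b = 1 := by linarith
    simpa [this] using hy
  · have := mul_pos ha hx
    have := mul_nonneg hb hy.le
    linarith

theorem connectedComponentIn_eq_of_orient_pos {p q P Q : Pt} (hpq : p ≠ q)
    (hP : 0 < orient p q P) (hQ : 0 < orient p q Q) :
    connectedComponentIn (lineThrough p q)ᶜ P = connectedComponentIn (lineThrough p q)ᶜ Q := by
  refine connectedComponentIn_eq ((convex_setOf_orient_pos p q).isPreconnected
    |>.subset_connectedComponentIn hP (fun x hx => ?_) hQ)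
  rw [Set.mem_compl_iff, mem_lineThrough hpq]
  exact ne_of_gt hx

theorem lineThrough_comm (p q : Pt) : lineThrough p q = lineThrough q p := by
  unfold lineThrough; rw [Set.pair_comm]

theorem not_separates_of_same_side {p q P Q : Pt} (hpq : p ≠ q)
    (h : 0 < orient p q P * orient p q Q) : ¬ Separates (lineThrough p q) P Q := by
  rintro ⟨-, -, hne⟩
  rcases pos_and_pos_or_neg_and_neg_of_mul_pos h with ⟨hP, hQ⟩ | ⟨hP, hQ⟩
  · exact hne (connectedComponentIn_eq_of_orient_pos hpq hP hQ)
  · rw [lineThrough_comm] at hne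
    refine hne (connectedComponentIn_eq_of_orient_pos hpq.symm ?_ ?_) <;>
      rw [orient_swap_left] <;> linarith

theorem separates_iff {p q P Q : Pt} (hpq : p ≠ q) :
    Separates (lineThrough p q) P Q ↔ orient p q P * orient p q Q < 0 := by
  constructor
  · intro h
    by_contra! hge
    rcases hge.eq_or_lt with h0 | hpos
    · rcases mul_eq_zero.mp h0.symm with h0 | h0
      · exact h.1 ((mem_lineThrough hpq).2 h0)
      · exact h.2.1 ((mem_lineThrough hpq).2 h0)
    · exact not_separates_of_same_side hpq hpos h
  · intro h
    have hP : P ∈ (lineThrough p q)ᶜ := by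
      rw [Set.mem_compl_iff, mem_lineThrough hpq]; rintro h0; simp [h0] at h
    have hQ : Q ∈ (lineThrough p q)ᶜ := by
      rw [Set.mem_compl_iff, mem_lineThrough hpq]; rintro h0; simp [h0] at h
    refine ⟨hP, hQ, fun heq => ?_⟩
    have hc : IsPreconnected (orient p q '' connectedComponentIn (lineThrough p q)ᶜ P) :=
      isPreconnected_connectedComponentIn.image _ (continuous_orient p q).continuousOn
    have h1 := Set.mem_image_of_mem (orient p q) (mem_connectedComponentIn hP)
    have h2 : orient p q Q ∈ orient p q '' connectedComponentIn (lineThrough p q)ᶜ P := by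
      rw [heq]; exact Set.mem_image_of_mem _ (mem_connectedComponentIn hQ)
    have h0 : (0 : ℝ) ∈ orient p q '' connectedComponentIn (lineThrough p q)ᶜ P := by
      rcases mul_neg_iff.mp h with ⟨ha, hb⟩ | ⟨ha, hb⟩
      · exact hc.ordConnected.out h2 h1 ⟨hb.le, ha.le⟩
      · exact hc.ordConnected.out h1 h2 ⟨ha.le, hb.le⟩
    obtain ⟨x, hx, hx0⟩ := h0
    exact connectedComponentIn_subset _ _ hx ((mem_lineThrough hpq).2 hx0)

theorem IsRectDrawing.orient_ne_zero {V : Type*} {f : V → Pt} (hf : IsRectDrawing f) {a b c : V}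
    (hab : a ≠ b) (hac : a ≠ c) (hbc : b ≠ c) : orient (f a) (f b) (f c) ≠ 0 := by
  rw [Ne, ← collinear_iff_orient_eq_zero (hf.1.ne hab)]
  exact hf.2.2 _ ⟨a, rfl⟩ _ ⟨b, rfl⟩ _ ⟨c, rfl⟩ (hf.1.ne hab) (hf.1.ne hac) (hf.1.ne hbc)

theorem isRectDrawing_of_orient_ne_zero {V : Type*} [Fintype V] {f : V → Pt}
    (hV : 2 < Fintype.card V)
    (h : ∀ a b c, a ≠ b → a ≠ c → b ≠ c → orient (f a) (f b) (f c) ≠ 0) : IsRectDrawing f := by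
  classical
  have hinj : Function.Injective f := by
    intro a b hab
    by_contra hne
    obtain ⟨c, hc⟩ : ∃ c, c ∉ ({a, b} : Finset V) := by
      by_contra! hall
      have := Finset.card_le_card (fun c _ => hall c : Finset.univ ⊆ ({a, b} : Finset V))
      have := Finset.card_le_two (a := a) (b := b)
      rw [Finset.card_univ] at *
      omega
    simp only [Finset.mem_insert, Finset.mem_singleton, not_or] at hc
    refine h a b c hne (Ne.symm hc.1) (Ne.symm hc.2) ?_
    simp [orient, hab]
  refine ⟨hinj, Set.finite_range f, ?_⟩
  rintro _ ⟨a, rfl⟩ _ ⟨b, rfl⟩ _ ⟨c, rfl⟩ hab hac hbc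
  rw [collinear_iff_orient_eq_zero hab]
  exact h a b c (fun e => hab (e ▸ rfl)) (fun e => hac (e ▸ rfl)) (fun e => hbc (e ▸ rfl))

/-- The pairs of vertices whose line separates `f s` from `f t`. -/
noncomputable def sepPairs {m : ℕ} (f : Fin m → Pt) (s t : Fin m) : Finset (Finset (Fin m)) := by
  classical
  exact {e | ∃ a b, e = {a, b} ∧ a ≠ b ∧ s ∉ e ∧ t ∉ e ∧
    orient (f a) (f b) (f s) * orient (f a) (f b) (f t) < 0}

theorem mem_sepPairs {m : ℕ} {f : Fin m → Pt} {s t : Fin m} {e : Finset (Fin m)} :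
    e ∈ sepPairs f s t ↔ ∃ a b, e = {a, b} ∧ a ≠ b ∧ s ∉ e ∧ t ∉ e ∧
      orient (f a) (f b) (f s) * orient (f a) (f b) (f t) < 0 := by
  simp [sepPairs]

theorem sepCount_eq_card_sepPairs {m : ℕ} {f : Fin m → Pt} (hf : Function.Injective f)
    (s t : Fin m) : sepCount f s t = (sepPairs f s t).card := by
  unfold sepCount
  rw [← Set.ncard_coe_finset]
  congr 1
  ext e
  rw [Set.mem_ofPred_eq, Finset.mem_coe, mem_sepPairs]
  refine exists_congr fun a => exists_congr fun b => and_congr_right fun _ =>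
    and_congr_right fun hab => and_congr_right fun _ => and_congr_right fun _ => ?_
  exact separates_iff (hf.ne hab)

theorem val_nextFin {n : ℕ} (i : Fin n) :
    (nextFin i).val = i.val + 1 ∧ i.val + 1 < n ∨ (nextFin i).val = 0 ∧ i.val + 1 = n := by
  have h := i.isLt
  unfold nextFin
  rcases Nat.lt_or_ge (i.val + 1) n with h1 | h1
  · exact Or.inl ⟨Nat.mod_eq_of_lt h1, h1⟩
  · have h2 : i.val + 1 = n := by omega
    exact Or.inr ⟨by simp [h2], h2⟩

theorem drawingCrossings_wheelGraph {n : ℕ} (hn : 3 ≤ n) (f : Fin (n + 1) → Pt) :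
    drawingCrossings (wheelGraph n) f =
      ∑ i : Fin n, sepCount f 0 i.succ + ∑ i : Fin n, sepCount f i.succ (nextFin i).succ := by
  classical
  have hE : (wheelGraph n).edgeSet.toFinite.toFinset =
      (Finset.univ.image fun i : Fin n => s((0 : Fin (n + 1)), i.succ)) ∪
      Finset.univ.image fun i : Fin n => s(i.succ, (nextFin i).succ) := by
    ext e
    simp only [Set.Finite.mem_toFinset, wheelGraph, SimpleGraph.edgeSet_fromEdgeSet, Set.mem_sdiff,
      Set.mem_union, Set.mem_ofPred_eq, Finset.mem_union, Finset.mem_image, Finset.mem_univ,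
      true_and, eq_comm (a := e)]
    refine and_iff_left_of_imp ?_
    rintro (⟨i, rfl⟩ | ⟨i, rfl⟩)
    · simpa using (Fin.succ_ne_zero i).symm
    · have := val_nextFin i
      simp [Fin.ext_iff]
      omega
  unfold drawingCrossings
  rw [hE, Finset.sum_union, Finset.sum_image, Finset.sum_image]
  · simp
  · intro i _ j _ h
    have h1 := val_nextFin i
    have h2 := val_nextFin j
    simp [Fin.ext_iff] at h
    ext
    omega
  · intro i _ j _ h
    simpa [Fin.ext_iff] using h
  · rw [Finset.disjoint_left]
    intro e h1 h2
    simp only [Finset.mem_image, Finset.mem_univ, true_and] at h1 h2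
    obtain ⟨i, rfl⟩ := h1
    obtain ⟨j, h⟩ := h2
    simp [Fin.ext_iff] at h

/-- The outer vertices lying to the left of the ray from the hub to the outer vertex `i`. -/
noncomputable def leftOf {n : ℕ} (f : Fin (n + 1) → Pt) (i : Fin n) : Finset (Fin n) := by
  classical
  exact {j | 0 < orient (f 0) (f i.succ) (f j.succ)}

theorem mem_leftOf {n : ℕ} {f : Fin (n + 1) → Pt} {i j : Fin n} :
    j ∈ leftOf f i ↔ 0 < orient (f 0) (f i.succ) (f j.succ) := by
  simp [leftOf]

theorem not_mem_leftOf_of_mem {n : ℕ} {f : Fin (n + 1) → Pt} {i j : Fin n}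
    (h : j ∈ leftOf f i) : i ∉ leftOf f j := by
  rw [mem_leftOf] at h ⊢
  rw [orient_swap]
  linarith

theorem self_not_mem_leftOf {n : ℕ} (f : Fin (n + 1) → Pt) (i : Fin n) : i ∉ leftOf f i :=
  fun h => not_mem_leftOf_of_mem h h

/-- Triples of outer vertices contained in an open half-plane bounded by a line through the hub,
listed by their first element together with the other two. -/
noncomputable def halfPlaneTriples {n : ℕ} (f : Fin (n + 1) → Pt) :
    Finset (Σ _ : Fin n, Finset (Fin n)) :=
  Finset.univ.sigma fun i => (leftOf f i).powersetCard 2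

/-- The pairs consisting of a spoke and a line separating its end points. -/
noncomputable def spokeSeparations {n : ℕ} (f : Fin (n + 1) → Pt) :
    Finset (Σ _ : Fin n, Finset (Fin (n + 1))) :=
  Finset.univ.sigma fun t => sepPairs f 0 t.succ

theorem card_halfPlaneTriples {n : ℕ} (f : Fin (n + 1) → Pt) :
    (halfPlaneTriples f).card = ∑ i, (leftOf f i).card.choose 2 := by
  simp [halfPlaneTriples, Finset.card_sigma, Finset.card_powersetCard]

theorem card_spokeSeparations {n : ℕ} {f : Fin (n + 1) → Pt} (hf : Function.Injective f) :
    (spokeSeparations f).card = ∑ t : Fin n, sepCount f 0 t.succ := by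
  simp [spokeSeparations, Finset.card_sigma, sepCount_eq_card_sepPairs hf]

theorem insert_injOn_halfPlaneTriples {n : ℕ} (f : Fin (n + 1) → Pt) :
    Set.InjOn (fun x : Σ _ : Fin n, Finset (Fin n) => (insert x.1 x.2).map (Fin.succEmb n))
      (halfPlaneTriples f) := by
  rintro ⟨i, e⟩ hi ⟨j, d⟩ hj h
  simp only [halfPlaneTriples, Finset.coe_sigma, Finset.coe_univ, Set.mem_sigma_iff, Set.mem_univ,
    true_and, Finset.mem_coe, Finset.mem_powersetCard] at hi hj
  replace h : insert i e = insert j d := Finset.map_injective _ h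
  have hij : i = j := by
    by_contra hne
    have h1 : i ∈ insert j d := h ▸ Finset.mem_insert_self i e
    have h2 : j ∈ insert i e := h ▸ Finset.mem_insert_self j d
    have h1 := hj.1 (Finset.mem_of_mem_insert_of_ne h1 hne)
    have h2 := hi.1 (Finset.mem_of_mem_insert_of_ne h2 (Ne.symm hne))
    exact not_mem_leftOf_of_mem h1 h2
  subst hij
  have h1 : i ∉ e := fun h => self_not_mem_leftOf f i (hi.1 h)
  have h2 : i ∉ d := fun h => self_not_mem_leftOf f i (hj.1 h)
  rw [← Finset.erase_insert h1, h, Finset.erase_insert h2]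

theorem exists_spokeSeparation {n : ℕ} {f : Fin (n + 1) → Pt} (hf : IsRectDrawing f)
    {i j k : Fin n} (hj : j ∈ leftOf f i) (hk : k ∈ leftOf f i) (hjk : k ∈ leftOf f j) :
    ∃ x ∈ spokeSeparations f, insert x.1.succ x.2 = {i.succ, j.succ, k.succ} := by
  have hij' : i ≠ j := fun h => self_not_mem_leftOf f i (by rwa [← h] at hj)
  have hik' : i ≠ k := fun h => self_not_mem_leftOf f i (by rwa [← h] at hk)
  have hjk' : j ≠ k := fun h => self_not_mem_leftOf f j (by rwa [← h] at hjk)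
  rw [mem_leftOf] at hj hk hjk
  have hne : orient (f i.succ) (f j.succ) (f k.succ) ≠ 0 :=
    hf.orient_ne_zero (by simpa) (by simpa) (by simpa)
  rcases hne.lt_or_gt with hlt | hgt
  · refine ⟨⟨i, {j.succ, k.succ}⟩, ?_, rfl⟩
    simp only [spokeSeparations, Finset.mem_sigma, Finset.mem_univ, true_and, mem_sepPairs]
    refine ⟨j.succ, k.succ, rfl, by simpa, ?_, ?_, ?_⟩
    · simp [(Fin.succ_ne_zero _).symm]
    · simp [hij', hik']
    · rw [orient_rotate (f 0), orient_rotate (f i.succ)]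
      exact mul_neg_of_pos_of_neg hjk hlt
  · refine ⟨⟨j, {i.succ, k.succ}⟩, ?_, by ext; simp; tauto⟩
    simp only [spokeSeparations, Finset.mem_sigma, Finset.mem_univ, true_and, mem_sepPairs]
    refine ⟨i.succ, k.succ, rfl, by simpa, ?_, ?_, ?_⟩
    · simp [(Fin.succ_ne_zero _).symm]
    · simp [hij'.symm, hjk']
    · rw [orient_rotate (f 0), orient_swap (f i.succ)]
      exact mul_neg_of_pos_of_neg hk (by linarith)

theorem sum_choose_le_spokes {n : ℕ} {f : Fin (n + 1) → Pt} (hf : IsRectDrawing f) :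
    ∑ i, (leftOf f i).card.choose 2 ≤ ∑ t : Fin n, sepCount f 0 t.succ := by
  rw [← card_halfPlaneTriples, ← card_spokeSeparations hf.1,
    ← Finset.card_image_of_injOn (insert_injOn_halfPlaneTriples f)]
  refine le_trans (Finset.card_le_card ?_) (Finset.card_image_le
    (f := fun x : Σ _ : Fin n, Finset (Fin (n + 1)) => insert x.1.succ x.2))
  intro s hs
  obtain ⟨⟨i, e⟩, hx, rfl⟩ := Finset.mem_image.mp hs
  simp only [halfPlaneTriples, Finset.mem_sigma, Finset.mem_univ, true_and,
    Finset.mem_powersetCard, Finset.card_eq_two] at hx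
  obtain ⟨hsub, j, k, hjk, rfl⟩ := hx
  have hj := hsub (Finset.mem_insert_self j _)
  have hk := hsub (Finset.mem_insert_of_mem (Finset.mem_singleton_self k))
  rw [Finset.mem_image]
  have hij : i ≠ j := fun h => self_not_mem_leftOf f i (by rwa [← h] at hj)
  by_cases hjk' : k ∈ leftOf f j
  · obtain ⟨x, hx, h⟩ := exists_spokeSeparation hf hj hk hjk'
    exact ⟨x, hx, by rw [h]; simp [Finset.map_insert]⟩
  · have hkj : j ∈ leftOf f k := by
      rw [mem_leftOf] at hjk' ⊢
      have := hf.orient_ne_zero (a := 0) (b := j.succ) (c := k.succ)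
        (Fin.succ_ne_zero _).symm (Fin.succ_ne_zero _).symm (by simpa)
      rw [orient_swap]
      have := lt_of_le_of_ne (not_lt.mp hjk') this
      linarith
    obtain ⟨x, hx, h⟩ := exists_spokeSeparation hf hk hj hkj
    exact ⟨x, hx, by rw [h]; ext; simp [Finset.map_insert]; tauto⟩

/-- The rim edges, given by their first vertex, whose end points are separated by the line through
the hub and the outer vertex `j`. -/
noncomputable def rimCuts {n : ℕ} (f : Fin (n + 1) → Pt) (j : Fin n) : Finset (Fin n) := by
  classical
  exact {i | orient (f 0) (f j.succ) (f i.succ) * orient (f 0) (f j.succ) (f (nextFin i).succ) < 0}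

theorem mem_rimCuts {n : ℕ} {f : Fin (n + 1) → Pt} {i j : Fin n} :
    i ∈ rimCuts f j ↔
      orient (f 0) (f j.succ) (f i.succ) * orient (f 0) (f j.succ) (f (nextFin i).succ) < 0 := by
  simp [rimCuts]

theorem sum_card_rimCuts {n : ℕ} (f : Fin (n + 1) → Pt) :
    ∑ j, (rimCuts f j).card = ∑ i, (Finset.univ.filter fun j => i ∈ rimCuts f j).card := by
  have h : ∀ j, (rimCuts f j).card = ∑ i, if i ∈ rimCuts f j then 1 else 0 := by simp
  simp_rw [h, Finset.card_filter]
  exact Finset.sum_comm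

theorem sum_card_rimCuts_le_rim {n : ℕ} {f : Fin (n + 1) → Pt} (hf : Function.Injective f) :
    ∑ j, (rimCuts f j).card ≤ ∑ i : Fin n, sepCount f i.succ (nextFin i).succ := by
  rw [sum_card_rimCuts]
  refine Finset.sum_le_sum fun i _ => ?_
  rw [sepCount_eq_card_sepPairs hf]
  refine Finset.card_le_card_of_injOn (fun j => {0, j.succ}) ?_ ?_
  · intro j hj
    have hj : i ∈ rimCuts f j := by simpa using hj
    rw [mem_rimCuts] at hj
    rw [Finset.mem_coe, mem_sepPairs]
    refine ⟨0, j.succ, rfl, (Fin.succ_ne_zero j).symm, ?_, ?_, hj⟩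
    · have : i ≠ j := by rintro rfl; simp [orient, mul_comm] at hj
      simpa
    · have : nextFin i ≠ j := by rintro rfl; simp [orient, mul_comm] at hj
      simpa
  · intro j _ k _ h
    have : j.succ ∈ ({0, k.succ} : Finset (Fin (n + 1))) := by
      rw [← show ({0, j.succ} : Finset (Fin (n + 1))) = {0, k.succ} from h]; simp
    simpa using this

theorem rimCuts_nonempty {n : ℕ} {f : Fin (n + 1) → Pt} (hf : IsRectDrawing f) {j : Fin n}
    (h0 : (leftOf f j).card ≠ 0) (h1 : (leftOf f j).card + 1 ≠ n) : (rimCuts f j).Nonempty := by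
  by_contra hempty
  rw [Finset.not_nonempty_iff_eq_empty] at hempty
  have hn : 0 < n := j.pos
  have hne : ∀ i, i ≠ j → orient (f 0) (f j.succ) (f i.succ) ≠ 0 := fun i hi =>
    hf.orient_ne_zero (Fin.succ_ne_zero _).symm (Fin.succ_ne_zero _).symm (by simpa using hi.symm)
  have step : ∀ i, i ≠ j → nextFin i ≠ j → (i ∈ leftOf f j ↔ nextFin i ∈ leftOf f j) := by
    intro i hi hi'
    have h : i ∉ rimCuts f j := by simp [hempty]
    rw [mem_rimCuts, not_lt] at h
    have h := lt_of_le_of_ne h (mul_ne_zero (hne _ hi) (hne _ hi')).symm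
    rw [mem_leftOf, mem_leftOf]
    rcases pos_and_pos_or_neg_and_neg_of_mul_pos h with ⟨ha, hb⟩ | ⟨ha, hb⟩
    · simp [ha, hb]
    · exact iff_of_false ha.not_gt hb.not_gt
  let y : ℕ → Fin n := fun m => ⟨(j.val + m) % n, Nat.mod_lt _ hn⟩
  have hy : ∀ m, nextFin (y m) = y (m + 1) := by
    intro m
    simp [y, nextFin, add_assoc]
  have hyj : ∀ m, 1 ≤ m → m < n → y m ≠ j := by
    intro m hm hmn h
    have h : (j.val + m) % n = j.val := congrArg Fin.val h
    have hj := j.isLt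
    rcases Nat.lt_or_ge (j.val + m) n with h2 | h2
    · rw [Nat.mod_eq_of_lt h2] at h; omega
    · rw [Nat.mod_eq_sub_mod h2, Nat.mod_eq_of_lt (by omega)] at h; omega
  have hsurj : ∀ i, i ≠ j → ∃ m, 1 ≤ m ∧ m < n ∧ y m = i := by
    intro i hi
    have hi := Fin.val_ne_of_ne hi
    have h3 := i.isLt
    have h4 := j.isLt
    rcases Nat.lt_or_ge i.val j.val with h2 | h2
    · refine ⟨i.val + n - j.val, by omega, by omega, Fin.ext ?_⟩
      simp only [y]
      rw [show j.val + (i.val + n - j.val) = i.val + n by omega, Nat.add_mod_right,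
        Nat.mod_eq_of_lt h3]
    · refine ⟨i.val - j.val, by omega, by omega, Fin.ext ?_⟩
      simp only [y]
      rw [show j.val + (i.val - j.val) = i.val by omega, Nat.mod_eq_of_lt h3]
  have hall : ∀ m, 1 ≤ m → m < n → (y m ∈ leftOf f j ↔ y 1 ∈ leftOf f j) := by
    intro m hm
    induction m, hm using Nat.le_induction with
    | base => simp
    | succ m hm ih =>
      intro hmn
      rw [← ih (by omega), ← hy, step _ (hyj m hm (by omega))
        (by rw [hy]; exact hyj _ (by omega) hmn)]
  by_cases h : y 1 ∈ leftOf f j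
  · apply h1
    have : leftOf f j = Finset.univ.erase j := by
      ext i
      simp only [Finset.mem_erase, Finset.mem_univ, and_true]
      refine ⟨fun hi hij => self_not_mem_leftOf f j (hij ▸ hi), fun hi => ?_⟩
      obtain ⟨m, hm, hmn, rfl⟩ := hsurj i hi
      exact (hall m hm hmn).2 h
    rw [this, Finset.card_erase_of_mem (Finset.mem_univ _), Finset.card_univ, Fintype.card_fin]
    omega
  · apply h0
    rw [Finset.card_eq_zero, Finset.eq_empty_iff_forall_notMem]
    intro i hi
    have hij : i ≠ j := fun hij => self_not_mem_leftOf f j (hij ▸ hi)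
    obtain ⟨m, hm, hmn, rfl⟩ := hsurj i hij
    exact h ((hall m hm hmn).1 hi)

theorem two_mul_sum_card_leftOf {n : ℕ} {f : Fin (n + 1) → Pt} (hf : IsRectDrawing f) :
    2 * ∑ i, ((leftOf f i).card : ℤ) = n * (n - 1) := by
  classical
  have h : ∀ i, ((leftOf f i).card : ℤ) = ∑ j, if j ∈ leftOf f i then 1 else 0 := by
    intro i; simp
  have h' : ∑ i, ((leftOf f i).card : ℤ) = ∑ i, ∑ j, if i ∈ leftOf f j then 1 else 0 := by
    rw [Finset.sum_comm]; exact Finset.sum_congr rfl fun i _ => h i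
  rw [two_mul]
  conv_lhs => arg 2; rw [h']
  simp_rw [h]
  rw [← Finset.sum_add_distrib]
  simp_rw [← Finset.sum_add_distrib]
  have key : ∀ i j : Fin n, ((if j ∈ leftOf f i then (1 : ℤ) else 0) +
      if i ∈ leftOf f j then 1 else 0) = 1 - if i = j then 1 else 0 := by
    intro i j
    by_cases hij : i = j
    · subst hij; simp [self_not_mem_leftOf]
    · have := hf.orient_ne_zero (a := 0) (b := i.succ) (c := j.succ)
        (Fin.succ_ne_zero _).symm (Fin.succ_ne_zero _).symm (by simpa)
      simp only [mem_leftOf, orient_swap (f 0) (f i.succ) (f j.succ)]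
      rcases this.lt_or_gt with h | h
      · simp [hij, h, h.le]
      · simp [hij, h, h.le]
  simp_rw [key]
  simp [Finset.sum_sub_distrib]
  ring

theorem two_mul_choose_two (o : ℕ) : 2 * (o.choose 2 : ℤ) = o * (o - 1) := by
  have h := Nat.choose_two_right o
  have h2 := Nat.even_mul_pred_self o
  have h3 : 2 * o.choose 2 = o * (o - 1) := by rw [h]; exact Nat.mul_div_cancel' h2.two_dvd
  rcases o with _ | o
  · simp
  · zify at h3; simpa using h3

theorem wheel_lower_bound {k : ℕ} (hk : 1 ≤ k) {f : Fin (2 * k + 2 + 1) → Pt}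
    (hf : IsRectDrawing f) :
    (k + 1) * (k ^ 2 + 2) ≤ drawingCrossings (wheelGraph (2 * k + 2)) f := by
  rw [drawingCrossings_wheelGraph (by omega)]
  refine le_trans ?_ (add_le_add (sum_choose_le_spokes hf) (sum_card_rimCuts_le_rim hf.1))
  have hterm : ∀ j, (k : ℤ) * (k - 1) + 2 * k * ((leftOf f j).card - k) + 2 ≤
      2 * ((leftOf f j).card.choose 2) + 2 * (rimCuts f j).card := by
    intro j
    rw [two_mul_choose_two]
    by_cases h0 : (leftOf f j).card = 0
    · rw [h0]
      push_cast
      nlinarith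
    by_cases h1 : (leftOf f j).card + 1 = 2 * k + 2
    · rw [show (leftOf f j).card = 2 * k + 1 by omega]
      push_cast
      nlinarith
    have h2 := (rimCuts_nonempty hf h0 h1).card_pos
    have h3 : (0 : ℤ) ≤ ((leftOf f j).card - k) * ((leftOf f j).card - k - 1) := by
      rcases le_or_gt (leftOf f j).card k with h | h
      · apply mul_nonneg_of_nonpos_of_nonpos <;> omega
      · apply mul_nonneg <;> omega
    zify at h2
    nlinarith
  have hsum := Finset.sum_le_sum fun j (_ : j ∈ Finset.univ) => hterm j
  have hcard := two_mul_sum_card_leftOf hf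
  simp only [Finset.sum_add_distrib, ← Finset.mul_sum, Finset.sum_sub_distrib, Finset.sum_const,
    Finset.card_univ, Fintype.card_fin, nsmul_eq_mul] at hsum
  push_cast at hsum hcard
  zify
  nlinarith

/-- Among the vertices `0, …, 2k + 1` of a regular `(2k + 3)`-gon, `j` lies on the half of the
polygon following `i`. -/
def Ahead {k : ℕ} (i j : Fin (2 * k + 2)) : Prop :=
  i.val < j.val ∧ j.val ≤ i.val + k + 1 ∨ j.val + k + 2 ≤ i.val

/-- A drawing with the orientations of a regular `(2k + 3)`-gon one of whose vertices is removed,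
the hub being its center. -/
def IsPunctured {k : ℕ} (f : Fin (2 * k + 2 + 1) → Pt) : Prop :=
  (∀ i j, Ahead i j → 0 < orient (f 0) (f i.succ) (f j.succ)) ∧
    ∀ i j l : Fin (2 * k + 2), i < j → j < l → 0 < orient (f i.succ) (f j.succ) (f l.succ)

theorem exists_isPunctured (k : ℕ) : ∃ f : Fin (2 * k + 2 + 1) → Pt, IsPunctured f := by
  have hN : (0 : ℝ) < 2 * k + 3 := by positivity
  have hpi := Real.pi_pos
  let θ : Fin (2 * k + 2) → ℝ := fun i => 2 * Real.pi * i.val / (2 * k + 3)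
  refine ⟨Fin.cons (0, 0) fun i => (Real.cos (θ i), Real.sin (θ i)), ?_, ?_⟩
  · intro i j h
    have h1 : orient (0, 0) (Real.cos (θ i), Real.sin (θ i)) (Real.cos (θ j), Real.sin (θ j)) =
        Real.sin (θ j - θ i) := by
      simp only [orient, Real.sin_sub]; ring
    simp only [Fin.cons_zero, Fin.cons_succ, h1]
    have hi : (i.val : ℝ) < 2 * k + 2 := by exact_mod_cast i.isLt
    rcases h with ⟨h, h'⟩ | h
    · have h : (i.val : ℝ) < j.val := by exact_mod_cast h
      have h' : (j.val : ℝ) ≤ i.val + k + 1 := by exact_mod_cast h'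
      have he : θ j - θ i = 2 * Real.pi * (j.val - i.val) / (2 * k + 3) := by
        simp only [θ]; ring
      rw [he]
      apply Real.sin_pos_of_pos_of_lt_pi
      · apply div_pos (mul_pos (by linarith) (by linarith)) hN
      · rw [div_lt_iff₀ hN]; nlinarith
    · have h : (j.val : ℝ) + k + 2 ≤ i.val := by exact_mod_cast h
      have hj : (0 : ℝ) ≤ j.val := by positivity
      have he : θ j - θ i + 2 * Real.pi =
          2 * Real.pi * (j.val - i.val + (2 * k + 3)) / (2 * k + 3) := by
        simp only [θ]; field_simp
      rw [← Real.sin_add_two_pi, he]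
      apply Real.sin_pos_of_pos_of_lt_pi
      · apply div_pos (mul_pos (by linarith) (by linarith)) hN
      · rw [div_lt_iff₀ hN]; nlinarith
  · intro i j l hij hjl
    simp only [Fin.cons_succ]
    have hij : (i.val : ℝ) < j.val := by exact_mod_cast hij
    have hjl : (j.val : ℝ) < l.val := by exact_mod_cast hjl
    have hi : (0 : ℝ) ≤ i.val := by positivity
    have hl : (l.val : ℝ) < 2 * k + 2 := by exact_mod_cast l.isLt
    have hpos : ∀ a b : Fin (2 * k + 2), (a.val : ℝ) < b.val → 0 < Real.sin ((θ b - θ a) / 2) := by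
      intro a b hab
      have ha : (0 : ℝ) ≤ a.val := by positivity
      have hb : (b.val : ℝ) < 2 * k + 2 := by exact_mod_cast b.isLt
      have he : (θ b - θ a) / 2 = Real.pi * (b.val - a.val) / (2 * k + 3) := by
        simp only [θ]; ring
      rw [he]
      apply Real.sin_pos_of_pos_of_lt_pi
      · apply div_pos (mul_pos (by linarith) (by linarith)) hN
      · rw [div_lt_iff₀ hN]; nlinarith
    have key : orient (Real.cos (θ i), Real.sin (θ i)) (Real.cos (θ j), Real.sin (θ j))
        (Real.cos (θ l), Real.sin (θ l)) = 4 * (Real.sin ((θ j - θ i) / 2) *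
          Real.sin ((θ l - θ j) / 2) * Real.sin ((θ l - θ i) / 2)) := by
      obtain ⟨a, ha⟩ : ∃ a, a = (θ j - θ i) / 2 := ⟨_, rfl⟩
      obtain ⟨b, hb⟩ : ∃ b, b = (θ l - θ j) / 2 := ⟨_, rfl⟩
      have e1 : (θ l - θ i) / 2 = a + b := by rw [ha, hb]; ring
      have e2 : orient (Real.cos (θ i), Real.sin (θ i)) (Real.cos (θ j), Real.sin (θ j))
          (Real.cos (θ l), Real.sin (θ l)) =
          Real.sin (θ j - θ i) + Real.sin (θ l - θ j) - Real.sin (θ l - θ i) := by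
        simp only [orient, Real.sin_sub]; ring
      rw [e2, e1, ← ha, ← hb, show θ j - θ i = 2 * a by rw [ha]; ring,
        show θ l - θ j = 2 * b by rw [hb]; ring,
        show θ l - θ i = 2 * a + 2 * b by rw [ha, hb]; ring, Real.sin_add, Real.sin_add,
        Real.sin_two_mul, Real.sin_two_mul, Real.cos_two_mul', Real.cos_two_mul']
      have s1 := Real.sin_sq_add_cos_sq a
      have s2 := Real.sin_sq_add_cos_sq b
      linear_combination (-2 * Real.sin b * Real.cos b) * s1 +
        (-2 * Real.sin a * Real.cos a) * s2
    rw [key]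
    have := hpos i j hij
    have := hpos j l hjl
    have := hpos i l (hij.trans hjl)
    positivity

namespace IsPunctured

variable {k : ℕ} {f : Fin (2 * k + 2 + 1) → Pt}

theorem orient_hub_pos_iff (hf : IsPunctured f) (i j : Fin (2 * k + 2)) :
    0 < orient (f 0) (f i.succ) (f j.succ) ↔ Ahead i j := by
  refine ⟨fun h => ?_, hf.1 i j⟩
  by_contra hij
  by_cases he : i = j
  · subst he; simp [orient, mul_comm] at h
  · have hji : Ahead j i := by
      unfold Ahead at *
      omega
    have := hf.1 j i hji
    rw [orient_swap] at h
    linarith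

theorem orient_hub_neg_iff (hf : IsPunctured f) (i j : Fin (2 * k + 2)) :
    orient (f 0) (f i.succ) (f j.succ) < 0 ↔ Ahead j i := by
  rw [← hf.orient_hub_pos_iff, orient_swap (f 0) (f i.succ), neg_pos]

theorem orient_rim_pos (hf : IsPunctured f) {i j l : Fin (2 * k + 2)}
    (h : i < j ∧ j < l ∨ j < l ∧ l < i ∨ l < i ∧ i < j) :
    0 < orient (f i.succ) (f j.succ) (f l.succ) := by
  rcases h with ⟨h, h'⟩ | ⟨h, h'⟩ | ⟨h, h'⟩
  · exact hf.2 _ _ _ h h'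
  · rw [← orient_rotate]; exact hf.2 _ _ _ h h'
  · rw [orient_rotate (f l.succ)]; exact hf.2 _ _ _ h h'

theorem orient_rim_pos_iff (hf : IsPunctured f) {i j l : Fin (2 * k + 2)} (hij : i ≠ j)
    (hil : i ≠ l) (hjl : j ≠ l) : 0 < orient (f i.succ) (f j.succ) (f l.succ) ↔
      (i < j ∧ j < l ∨ j < l ∧ l < i ∨ l < i ∧ i < j) := by
  refine ⟨fun h => ?_, hf.orient_rim_pos⟩
  by_contra hc
  have := hf.orient_rim_pos (i := i) (j := l) (l := j) (by omega)
  rw [orient_swap] at this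
  linarith

theorem orient_rim_neg_iff (hf : IsPunctured f) {i j l : Fin (2 * k + 2)} (hij : i ≠ j)
    (hil : i ≠ l) (hjl : j ≠ l) : orient (f i.succ) (f j.succ) (f l.succ) < 0 ↔
      (i < l ∧ l < j ∨ l < j ∧ j < i ∨ j < i ∧ i < l) := by
  rw [← hf.orient_rim_pos_iff hil hij hjl.symm, orient_swap (f i.succ) (f j.succ), neg_pos]

theorem orient_hub_ne_zero (hf : IsPunctured f) {i j : Fin (2 * k + 2)} (hij : i ≠ j) :
    orient (f 0) (f i.succ) (f j.succ) ≠ 0 := by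
  rw [← lt_or_lt_iff_ne, hf.orient_hub_pos_iff, hf.orient_hub_neg_iff]
  unfold Ahead
  omega

theorem isRectDrawing (hf : IsPunctured f) : IsRectDrawing f := by
  apply isRectDrawing_of_orient_ne_zero
  · simp
  intro a b c hab hac hbc
  cases a using Fin.cases with
  | zero =>
    obtain ⟨i, rfl⟩ := Fin.exists_succ_eq.2 hab.symm
    obtain ⟨j, rfl⟩ := Fin.exists_succ_eq.2 hac.symm
    exact hf.orient_hub_ne_zero (by simpa using hbc)
  | succ l =>
    cases b using Fin.cases with
    | zero =>
      obtain ⟨j, rfl⟩ := Fin.exists_succ_eq.2 hbc.symm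
      rw [← orient_rotate]
      exact hf.orient_hub_ne_zero (by simpa using hac.symm)
    | succ i =>
      cases c using Fin.cases with
      | zero =>
        rw [orient_rotate (f 0)]
        exact hf.orient_hub_ne_zero (by simpa using hab)
      | succ j =>
        have h1 : l ≠ i := by simpa using hab
        have h2 : l ≠ j := by simpa using hac
        have h3 : i ≠ j := by simpa using hbc
        rw [← lt_or_lt_iff_ne, hf.orient_rim_pos_iff h1 h2 h3, hf.orient_rim_neg_iff h1 h2 h3]
        omega

theorem mem_spokeSeparations (hf : IsPunctured f) {t : Fin (2 * k + 2)}
    {e : Finset (Fin (2 * k + 2 + 1))} (h : ⟨t, e⟩ ∈ spokeSeparations f) :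
    ∃ u v, e = {u.succ, v.succ} ∧ Ahead u t ∧ Ahead t v ∧ Ahead u v := by
  simp only [spokeSeparations, Finset.mem_sigma, Finset.mem_univ, true_and, mem_sepPairs] at h
  obtain ⟨a, b, rfl, hab, h0, ht, h⟩ := h
  simp only [Finset.mem_insert, Finset.mem_singleton, not_or] at h0 ht
  obtain ⟨u, rfl⟩ := Fin.exists_succ_eq.2 (Ne.symm h0.1)
  obtain ⟨v, rfl⟩ := Fin.exists_succ_eq.2 (Ne.symm h0.2)
  have huv : u ≠ v := by simpa using hab
  have htu : t ≠ u := by simpa using ht.1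
  have htv : t ≠ v := by simpa using ht.2
  rw [orient_rotate (f 0), mul_neg_iff, hf.orient_hub_pos_iff, hf.orient_hub_neg_iff,
    hf.orient_rim_pos_iff huv htu.symm htv.symm, hf.orient_rim_neg_iff huv htu.symm htv.symm] at h
  rcases h with ⟨h, h'⟩ | ⟨h, h'⟩
  · refine ⟨u, v, rfl, ?_, ?_, h⟩ <;> unfold Ahead at * <;> omega
  · refine ⟨v, u, Finset.pair_comm _ _, ?_, ?_, h⟩ <;> unfold Ahead at * <;> omega

theorem spokes_le (hf : IsPunctured f) :
    ∑ t : Fin (2 * k + 2), sepCount f 0 t.succ ≤ ∑ i, (leftOf f i).card.choose 2 := by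
  rw [← card_halfPlaneTriples, ← card_spokeSeparations hf.isRectDrawing.1]
  have hinj : Set.InjOn (fun x : Σ _ : Fin (2 * k + 2), Finset (Fin (2 * k + 2 + 1)) =>
      insert x.1.succ x.2) (spokeSeparations f) := by
    rintro ⟨t, e⟩ h ⟨t', e'⟩ h' heq
    have ht : t.succ ∉ e := by
      simp only [Finset.mem_coe, spokeSeparations, Finset.mem_sigma, mem_sepPairs] at h
      obtain ⟨-, -, -, -, -, -, h, -⟩ := h
      exact h
    have ht' : t'.succ ∉ e' := by
      simp only [Finset.mem_coe, spokeSeparations, Finset.mem_sigma, mem_sepPairs] at h'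
      obtain ⟨-, -, -, -, -, -, h', -⟩ := h'
      exact h'
    replace heq : insert t.succ e = insert t'.succ e' := heq
    have htt : t = t' := by
      obtain ⟨u, v, rfl, h1, h2, h3⟩ := hf.mem_spokeSeparations h
      obtain ⟨u', v', rfl, h1', h2', h3'⟩ := hf.mem_spokeSeparations h'
      have m1 : t'.succ ∈ ({t.succ, u.succ, v.succ} : Finset (Fin (2 * k + 2 + 1))) := by
        rw [heq]; simp
      have m2 : u'.succ ∈ ({t.succ, u.succ, v.succ} : Finset (Fin (2 * k + 2 + 1))) := by
        rw [heq]; simp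
      have m3 : v'.succ ∈ ({t.succ, u.succ, v.succ} : Finset (Fin (2 * k + 2 + 1))) := by
        rw [heq]; simp
      simp only [Finset.mem_insert, Finset.mem_singleton, Fin.ext_iff, Fin.val_succ] at m1 m2 m3
      unfold Ahead at *
      omega
    subst htt
    rw [← Finset.erase_insert ht, heq, Finset.erase_insert ht']
  rw [← Finset.card_image_of_injOn hinj]
  refine le_trans (Finset.card_le_card ?_) (Finset.card_image_le
    (f := fun x : Σ _ : Fin (2 * k + 2), Finset (Fin (2 * k + 2)) =>
      (insert x.1 x.2).map (Fin.succEmb (2 * k + 2))))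
  intro s hs
  obtain ⟨⟨t, e⟩, hx, rfl⟩ := Finset.mem_image.mp hs
  obtain ⟨u, v, rfl, h1, h2, h3⟩ := hf.mem_spokeSeparations hx
  rw [Finset.mem_image]
  refine ⟨⟨u, {t, v}⟩, ?_, ?_⟩
  · simp only [halfPlaneTriples, Finset.mem_sigma, Finset.mem_univ, true_and,
      Finset.mem_powersetCard]
    constructor
    · intro w hw
      rw [mem_leftOf, hf.orient_hub_pos_iff]
      rcases Finset.mem_insert.mp hw with rfl | hw
      · exact h1
      · rwa [Finset.mem_singleton.mp hw]
    · apply Finset.card_pair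
      rintro rfl
      unfold Ahead at h2
      omega
  · ext
    simp [Finset.map_insert]
    tauto

theorem card_leftOf (hf : IsPunctured f) (i : Fin (2 * k + 2)) :
    (leftOf f i).card = if i.val ≤ k then k + 1 else k := by
  have h : (leftOf f i).map Fin.valEmbedding =
      if i.val ≤ k then Finset.Ioc i.val (i.val + k + 1)
      else Finset.Ioo i.val (2 * k + 2) ∪ Finset.range (i.val - k - 1) := by
    ext m
    simp only [Finset.mem_map, mem_leftOf, hf.orient_hub_pos_iff, Fin.valEmbedding_apply]
    have hi := i.isLt
    constructor
    · rintro ⟨j, h, rfl⟩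
      have hj := j.isLt
      unfold Ahead at h
      split_ifs <;> simp <;> omega
    · intro h
      have hm : m < 2 * k + 2 := by
        split_ifs at h <;> simp at h <;> omega
      refine ⟨⟨m, hm⟩, ?_, rfl⟩
      unfold Ahead
      split_ifs at h <;> simp at h ⊢ <;> omega
  rw [← Finset.card_map Fin.valEmbedding, h]
  split_ifs with hik
  · simp; omega
  · rw [Finset.card_union_of_disjoint]
    · have := i.isLt
      simp
      omega
    · rw [Finset.disjoint_left]
      intro m
      simp
      omega

theorem card_rimCuts_le_one (hf : IsPunctured f) (j : Fin (2 * k + 2)) :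
    (rimCuts f j).card ≤ 1 := by
  rw [Finset.card_le_one]
  intro a ha b hb
  rw [mem_rimCuts, mul_neg_iff, hf.orient_hub_pos_iff, hf.orient_hub_neg_iff,
    hf.orient_hub_pos_iff, hf.orient_hub_neg_iff] at ha hb
  have h1 := val_nextFin a
  have h2 := val_nextFin b
  unfold Ahead at ha hb
  ext
  omega

theorem rim_le (hf : IsPunctured f) :
    ∑ i : Fin (2 * k + 2), sepCount f i.succ (nextFin i).succ ≤ 2 * k + 2 := by
  refine le_trans ?_ (le_trans (Finset.sum_le_sum fun j (_ : j ∈ Finset.univ) =>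
    hf.card_rimCuts_le_one j) (by simp))
  rw [sum_card_rimCuts]
  refine Finset.sum_le_sum fun i _ => ?_
  rw [sepCount_eq_card_sepPairs hf.isRectDrawing.1]
  refine le_trans (Finset.card_le_card (t := (Finset.univ.filter fun j => i ∈ rimCuts f j).image
    fun j => ({0, j.succ} : Finset (Fin (2 * k + 2 + 1)))) ?_) Finset.card_image_le
  intro e he
  obtain ⟨a, b, rfl, hab, h0, h1, h⟩ := mem_sepPairs.mp he
  simp only [Finset.mem_insert, Finset.mem_singleton, not_or] at h0 h1
  simp only [Finset.mem_image, Finset.mem_filter, Finset.mem_univ, true_and, mem_rimCuts]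
  cases a using Fin.cases with
  | zero =>
    obtain ⟨j, rfl⟩ := Fin.exists_succ_eq.2 hab.symm
    exact ⟨j, h, rfl⟩
  | succ u =>
    cases b using Fin.cases with
    | zero =>
      refine ⟨u, ?_, Finset.pair_comm _ _⟩
      rw [orient_swap_left (f 0), orient_swap_left (f 0), neg_mul_neg] at h
      exact h
    | succ v =>
      exfalso
      simp only [Fin.succ_inj, ne_eq] at h0 h1 hab
      have hi := val_nextFin i
      rw [mul_neg_iff, hf.orient_rim_pos_iff hab (Ne.symm h0.1) (Ne.symm h0.2),
        hf.orient_rim_neg_iff hab (Ne.symm h0.1) (Ne.symm h0.2),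
        hf.orient_rim_pos_iff hab (Ne.symm h1.1) (Ne.symm h1.2),
        hf.orient_rim_neg_iff hab (Ne.symm h1.1) (Ne.symm h1.2)] at h
      omega

theorem drawingCrossings_le (hk : 1 ≤ k) (hf : IsPunctured f) :
    drawingCrossings (wheelGraph (2 * k + 2)) f ≤ (k + 1) * (k ^ 2 + 2) := by
  rw [drawingCrossings_wheelGraph (by omega)]
  refine le_trans (add_le_add hf.spokes_le hf.rim_le) ?_
  have hterm : ∀ j, (k : ℤ) * (k - 1) + 2 * k * ((leftOf f j).card - k) =
      2 * ((leftOf f j).card.choose 2) := by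
    intro j
    rw [two_mul_choose_two, hf.card_leftOf]
    split_ifs <;> push_cast <;> ring
  have hsum := Finset.sum_congr rfl fun j (_ : j ∈ Finset.univ) => hterm j
  have hcard := two_mul_sum_card_leftOf hf.isRectDrawing
  simp only [Finset.sum_add_distrib, ← Finset.mul_sum, Finset.sum_sub_distrib, Finset.sum_const,
    Finset.card_univ, Fintype.card_fin, nsmul_eq_mul] at hsum
  push_cast at hsum hcard
  zify
  nlinarith

end IsPunctured

/-- For even n ≥ 6, `OCN(W_{n,1}) = n(n² - 4n + 12)/8`. -/
theorem stmt_8 (n : ℕ) (hn : 6 ≤ n) (heven : Even n) :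
    OCN (wheelGraph n) = n * (n ^ 2 - 4 * n + 12) / 8 := by
  obtain ⟨k, rfl⟩ : ∃ k, n = 2 * k + 2 := by
    obtain ⟨m, rfl⟩ := heven
    exact ⟨m - 1, by omega⟩
  have hval : (2 * k + 2) * ((2 * k + 2) ^ 2 - 4 * (2 * k + 2) + 12) / 8 =
      (k + 1) * (k ^ 2 + 2) := by
    have hk : 2 ≤ k := by omega
    have h1 : (2 * k + 2) ^ 2 - 4 * (2 * k + 2) + 12 = 4 * (k ^ 2 + 2) := by
      have : 4 * (2 * k + 2) ≤ (2 * k + 2) ^ 2 := by nlinarith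
      zify [this]
      ring
    rw [h1, show (2 * k + 2) * (4 * (k ^ 2 + 2)) = (k + 1) * (k ^ 2 + 2) * 8 by ring,
      Nat.mul_div_cancel _ (by norm_num)]
  rw [hval]
  obtain ⟨f, hf⟩ := exists_isPunctured k
  have hmem : drawingCrossings (wheelGraph (2 * k + 2)) f ∈
      {n | ∃ f : Fin (2 * k + 2 + 1) → Pt, IsRectDrawing f ∧
        drawingCrossings (wheelGraph (2 * k + 2)) f = n} := ⟨f, hf.isRectDrawing, rfl⟩
  refine le_antisymm ((Nat.sInf_le hmem).trans (hf.drawingCrossings_le (by omega))) ?_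
  obtain ⟨g, hg, heq⟩ := Nat.sInf_mem ⟨_, hmem⟩
  unfold OCN
  rw [← heq]
  exact wheel_lower_bound (by omega) hg
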